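/- Let x ∈ ℝ^D be nonzero, let x̄ ∈ ℝ^D be any vector, and set r = x/‖x‖ − x̄. Suppose q = sign(S r) for a D×D i.i.d. standard Gaussian matrix S independent of everything else. Then for any fixed y ∈ ℝ^D, the TurboQuant estimator ‖x‖·⟨x̄, y⟩ + √(π/2)·(‖x‖·‖r‖/D)·⟨q, S y⟩ has expectation ⟨x, y⟩. -/

import Mathlib

open MeasureTheory ProbabilityTheory

/-- sign(t) = +1 if t ≥ 0, −1 otherwise. -/
noncomputable def qSign (t : ℝ) : ℝ := if 0 ≤ t then 1 else -1

/-!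
For a standard Gaussian row `g`, the pair `(X, Y) = (⟨g, r⟩, ⟨g, y⟩)` is jointly Gaussian, so
`Var X · Y - Cov(X, Y) · X`, being uncorrelated with `X`, is independent of `X`, hence uncorrelated
with every `f(X)`. This is Bussgang's identity `Var X · Cov(f(X), Y) = Cov(X, Y) · Cov(f(X), X)`.
For `f = sign` the last factor is `E|X| = √(2/π) ‖r‖`, so
`‖r‖ · E[sign⟨g, r⟩ ⟨g, y⟩] = √(2/π) ⟨r, y⟩`. Hence the correction term has mean `‖x‖ ⟨r, y⟩`, which
is exactly what the first stage misses, as `x = ‖x‖ (x̄ + r)`.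
-/

lemma measurable_qSign : Measurable qSign :=
  Measurable.ite measurableSet_Ici measurable_const measurable_const

lemma norm_qSign_le_one (t : ℝ) : ‖qSign t‖ ≤ 1 := by
  unfold qSign
  split_ifs <;> simp

lemma qSign_mul_self (t : ℝ) : qSign t * t = |t| := by
  unfold qSign
  split_ifs with ht
  · rw [one_mul, abs_of_nonneg ht]
  · rw [neg_one_mul, abs_of_neg (not_le.mp ht)]

lemma integral_abs_gaussianReal_zero_one : ∫ t, |t| ∂gaussianReal 0 1 = √(2 / Real.pi) := by
  let f (s : ℝ) : ℝ := s ^ (1 : ℝ) * Real.exp (-(1 / 2) * s ^ (2 : ℝ))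
  have density_smul_abs (t : ℝ) :
      gaussianPDFReal 0 1 t • |t| = (√(2 * Real.pi))⁻¹ * f |t| := by
    simp only [f, gaussianPDFReal, smul_eq_mul, sub_zero, Real.rpow_one, Real.rpow_two, sq_abs,
      NNReal.coe_one, mul_one]
    ring_nf
  have integral_f : ∫ s in Set.Ioi 0, f s = 1 := by
    rw [integral_rpow_mul_exp_neg_mul_rpow (by norm_num) (by norm_num) (by norm_num)]
    norm_num [Real.rpow_neg_one]
  calc ∫ t, |t| ∂gaussianReal 0 1
    _ = ∫ t, (√(2 * Real.pi))⁻¹ * f |t| := by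
      simp_rw [integral_gaussianReal_eq_integral_smul one_ne_zero, density_smul_abs]
    _ = 2 / √(2 * Real.pi) := by
      rw [integral_const_mul, integral_comp_abs, integral_f]
      ring
    _ = √(2 / Real.pi) := by
      rw [Real.sqrt_mul zero_le_two, Real.sqrt_div zero_le_two, ← div_div, Real.div_sqrt]

lemma integral_abs_gaussianReal_zero (v : NNReal) :
    ∫ t, |t| ∂gaussianReal 0 v = √(2 / Real.pi) * √v := by
  have map_sqrt_mul : (gaussianReal 0 1).map (√v * ·) = gaussianReal 0 v := by
    rw [gaussianReal_map_const_mul]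
    congr 1
    · exact mul_zero _
    · ext; simp
  rw [← map_sqrt_mul, integral_map (by fun_prop) (by fun_prop)]
  simp_rw [abs_mul, integral_const_mul, integral_abs_gaussianReal_zero_one,
    abs_of_nonneg (Real.sqrt_nonneg _), mul_comm]

section RandomVariables

variable {Ω : Type*} {mΩ : MeasurableSpace Ω} {P : Measure Ω} {X Y : Ω → ℝ}

lemma integrable_qSign_mul (hX : AEMeasurable X P) (hY : Integrable Y P) :
    Integrable (fun ω ↦ qSign (X ω) * Y ω) P :=
  hY.bdd_mul (measurable_qSign.comp_aemeasurable hX).aestronglyMeasurable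
    (.of_forall fun _ ↦ norm_qSign_le_one _)

lemma integral_abs_of_hasGaussianLaw (hX : HasGaussianLaw X P) (hX0 : P[X] = 0) :
    ∫ ω, |X ω| ∂P = √(2 / Real.pi) * √Var[X; P] := by
  rw [← integral_map (f := fun t : ℝ ↦ |t|) hX.aemeasurable (by fun_prop),
    hX.map_eq_gaussianReal, hX0, integral_abs_gaussianReal_zero,
    Real.coe_toNNReal _ (variance_nonneg _ _)]

lemma indepFun_variance_mul_sub_covariance_mul (hXY : HasGaussianLaw (fun ω ↦ (X ω, Y ω)) P) :
    IndepFun X (fun ω ↦ Var[X; P] * Y ω - cov[X, Y; P] * X ω) P := by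
  have := hXY.isProbabilityMeasure
  have joint : HasGaussianLaw (fun ω ↦ (X ω, Var[X; P] * Y ω - cov[X, Y; P] * X ω)) P :=
    hXY.map_fun ((ContinuousLinearMap.fst ℝ ℝ ℝ).prod
      (Var[X; P] • ContinuousLinearMap.snd ℝ ℝ ℝ - cov[X, Y; P] • ContinuousLinearMap.fst ℝ ℝ ℝ))
  refine joint.indepFun_of_covariance_eq_zero ?_
  rw [covariance_fun_sub_right hXY.fst.memLp_two (hXY.snd.memLp_two.const_mul _)
      (hXY.fst.memLp_two.const_mul _), covariance_const_mul_right, covariance_const_mul_right,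
    covariance_self hXY.fst.aemeasurable]
  ring

theorem variance_mul_covariance_comp (hXY : HasGaussianLaw (fun ω ↦ (X ω, Y ω)) P) {f : ℝ → ℝ}
    (hf : Measurable f) (hfX : MemLp (fun ω ↦ f (X ω)) 2 P) :
    Var[X; P] * cov[fun ω ↦ f (X ω), Y; P] = cov[X, Y; P] * cov[fun ω ↦ f (X ω), X; P] := by
  have := hXY.isProbabilityMeasure
  have memLp_smul_X := hXY.fst.memLp_two.const_mul cov[X, Y; P]
  have memLp_smul_Y := hXY.snd.memLp_two.const_mul Var[X; P]
  have uncorrelated :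
      cov[fun ω ↦ f (X ω), fun ω ↦ Var[X; P] * Y ω - cov[X, Y; P] * X ω; P] = 0 :=
    ((indepFun_variance_mul_sub_covariance_mul hXY).comp hf measurable_id).covariance_eq_zero
      hfX (memLp_smul_Y.sub memLp_smul_X)
  rw [covariance_fun_sub_right hfX memLp_smul_Y memLp_smul_X, covariance_const_mul_right,
    covariance_const_mul_right] at uncorrelated
  exact sub_eq_zero.mp uncorrelated

lemma variance_mul_integral_qSign_mul (hXY : HasGaussianLaw (fun ω ↦ (X ω, Y ω)) P)
    (hX0 : P[X] = 0) (hY0 : P[Y] = 0) :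
    Var[X; P] * ∫ ω, qSign (X ω) * Y ω ∂P =
      cov[X, Y; P] * (√(2 / Real.pi) * √Var[X; P]) := by
  have := hXY.isProbabilityMeasure
  have memLp_qSign : MemLp (fun ω ↦ qSign (X ω)) 2 P :=
    .of_bound (measurable_qSign.comp_aemeasurable hXY.fst.aemeasurable).aestronglyMeasurable 1
      (.of_forall fun _ ↦ norm_qSign_le_one _)
  have cov_qSign {Z : Ω → ℝ} (hZ : MemLp Z 2 P) (hZ0 : P[Z] = 0) :
      cov[fun ω ↦ qSign (X ω), Z; P] = ∫ ω, qSign (X ω) * Z ω ∂P := by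
    rw [covariance_eq_sub memLp_qSign hZ, hZ0, mul_zero, sub_zero]
    rfl
  have bussgang := variance_mul_covariance_comp hXY measurable_qSign memLp_qSign
  simpa only [cov_qSign hXY.snd.memLp_two hY0, cov_qSign hXY.fst.memLp_two hX0, qSign_mul_self,
    integral_abs_of_hasGaussianLaw hXY.fst hX0] using bussgang

end RandomVariables

variable {κ ι : Type*} [Fintype κ] [Fintype ι]

lemma sqrt_sum_sq_pos {v : ι → ℝ} (hv : v ≠ 0) : 0 < √(∑ j, v j ^ 2) := by
  obtain ⟨j, hj⟩ := Function.ne_iff.mp hv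
  exact Real.sqrt_pos.mpr <|
    Finset.sum_pos' (fun _ _ ↦ sq_nonneg _) ⟨j, Finset.mem_univ _, sq_pos_of_ne_zero hj⟩

lemma hasGaussianLaw_dotProduct_prodMk (μ : Measure (ι → ℝ)) [IsGaussian μ] (a b : ι → ℝ) :
    HasGaussianLaw (fun g ↦ (g ⬝ᵥ a, g ⬝ᵥ b)) μ :=
  IsGaussian.hasGaussianLaw_id.map_fun
    (((dotProductBilin ℝ ℝ).flip a).prod ((dotProductBilin ℝ ℝ).flip b)).toContinuousLinearMap

lemma integrable_qSign_dotProduct_mul_dotProduct (μ : Measure (ι → ℝ)) [IsGaussian μ]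
    (a b : ι → ℝ) : Integrable (fun g ↦ qSign (g ⬝ᵥ a) * (g ⬝ᵥ b)) μ := by
  have law := hasGaussianLaw_dotProduct_prodMk μ a b
  exact integrable_qSign_mul law.fst.aemeasurable law.snd.integrable

instance isGaussian_pi {E : ι → Type*} [∀ i, NormedAddCommGroup (E i)] [∀ i, NormedSpace ℝ (E i)]
    [∀ i, MeasurableSpace (E i)] [∀ i, BorelSpace (E i)] [∀ i, SecondCountableTopology (E i)]
    [∀ i, CompleteSpace (E i)] (μ : ∀ i, Measure (E i)) [∀ i, IsGaussian (μ i)] :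
    IsGaussian (Measure.pi μ) := by
  have indep : iIndepFun (fun i (g : ∀ i, E i) ↦ g i) (Measure.pi μ) :=
    iIndepFun_pi (X := fun _ ↦ id) fun _ ↦ aemeasurable_id
  have law_eval (i : ι) : HasLaw (fun g : ∀ i, E i ↦ g i) (μ i) (Measure.pi μ) :=
    (measurePreserving_eval μ i).hasLaw
  simpa using (indep.hasGaussianLaw fun i ↦ (law_eval i).hasGaussianLaw).isGaussian_map

section ProductMeasure

variable {μ : ι → Measure ℝ} [∀ i, IsProbabilityMeasure (μ i)]

lemma integral_dotProduct_pi (hμ : ∀ i, Integrable id (μ i)) (a : ι → ℝ) :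
    ∫ g, g ⬝ᵥ a ∂Measure.pi μ = (fun i ↦ ∫ t, t ∂μ i) ⬝ᵥ a := by
  simp only [dotProduct]
  rw [integral_finsetSum _ fun i _ ↦ (integrable_eval (hμ i)).mul_const _]
  simp_rw [integral_mul_const, integral_eval]

lemma memLp_eval_pi {p : ENNReal} {i : ι} (hμ : MemLp id p (μ i)) :
    MemLp (fun g ↦ g i) p (Measure.pi μ) :=
  hμ.comp_measurePreserving (measurePreserving_eval μ i)

lemma variance_eval_pi (i : ι) : Var[fun g ↦ g i; Measure.pi μ] = Var[id; μ i] := by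
  rw [← (measurePreserving_eval μ i).map_eq,
    variance_map aemeasurable_id (measurable_pi_apply i).aemeasurable]
  rfl

lemma covariance_eval_pi_of_ne (hμ : ∀ i, MemLp id 2 (μ i)) {i j : ι} (hij : i ≠ j) :
    cov[fun g ↦ g i, fun g ↦ g j; Measure.pi μ] = 0 :=
  ((iIndepFun_pi (X := fun _ ↦ id) fun _ ↦ aemeasurable_id).indepFun hij).covariance_eq_zero
    (memLp_eval_pi (hμ i)) (memLp_eval_pi (hμ j))

lemma covariance_dotProduct_pi (hμ : ∀ i, MemLp id 2 (μ i)) (a b : ι → ℝ) :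
    cov[fun g ↦ g ⬝ᵥ a, fun g ↦ g ⬝ᵥ b; Measure.pi μ] = ∑ i, Var[id; μ i] * (a i * b i) := by
  have memLp_mul (c : ι → ℝ) (i : ι) : MemLp (fun g ↦ g i * c i) 2 (Measure.pi μ) :=
    (memLp_eval_pi (hμ i)).mul_const (c i)
  simp only [dotProduct]
  rw [covariance_fun_sum_fun_sum (memLp_mul a) (memLp_mul b)]
  refine Finset.sum_congr rfl fun i _ ↦ ?_
  simp_rw [covariance_mul_const_left, covariance_mul_const_right]
  rw [Fintype.sum_eq_single i fun j hj ↦ by simp [covariance_eval_pi_of_ne hμ hj.symm],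
    covariance_self (measurable_pi_apply i).aemeasurable, variance_eval_pi]
  ring

end ProductMeasure

variable (ι) in
/-- The law of a random vector with i.i.d. standard Gaussian coordinates, on the function space
`ι → ℝ` rather than on `EuclideanSpace ℝ ι`. -/
noncomputable abbrev stdGaussianPi : Measure (ι → ℝ) :=
  .pi fun _ ↦ gaussianReal 0 1

lemma integral_dotProduct_stdGaussianPi (a : ι → ℝ) : ∫ g, g ⬝ᵥ a ∂stdGaussianPi ι = 0 := by
  rw [integral_dotProduct_pi fun _ ↦ IsGaussian.integrable_id]
  simp [dotProduct]

lemma covariance_dotProduct_stdGaussianPi (a b : ι → ℝ) :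
    cov[fun g ↦ g ⬝ᵥ a, fun g ↦ g ⬝ᵥ b; stdGaussianPi ι] = a ⬝ᵥ b := by
  rw [covariance_dotProduct_pi fun _ ↦ IsGaussian.memLp_two_id]
  simp [dotProduct]

lemma variance_dotProduct_stdGaussianPi (a : ι → ℝ) :
    Var[fun g ↦ g ⬝ᵥ a; stdGaussianPi ι] = ∑ j, a j ^ 2 := by
  rw [← covariance_self (by fun_prop), covariance_dotProduct_stdGaussianPi]
  simp only [dotProduct, sq]

theorem sqrt_sum_sq_mul_integral_qSign_dotProduct_mul_dotProduct (r y : ι → ℝ) :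
    √(∑ j, r j ^ 2) * ∫ g, qSign (g ⬝ᵥ r) * (g ⬝ᵥ y) ∂stdGaussianPi ι =
      √(2 / Real.pi) * (r ⬝ᵥ y) := by
  rcases eq_or_ne r 0 with rfl | hr
  · simp
  have row_identity := variance_mul_integral_qSign_mul (hasGaussianLaw_dotProduct_prodMk _ r y)
    (integral_dotProduct_stdGaussianPi r) (integral_dotProduct_stdGaussianPi y)
  rw [variance_dotProduct_stdGaussianPi, covariance_dotProduct_stdGaussianPi] at row_identity
  refine mul_left_cancel₀ (sqrt_sum_sq_pos hr).ne' ?_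
  rw [← mul_assoc, Real.mul_self_sqrt (by positivity), row_identity]
  ring

/-- The QJL estimator of `⟨r, y⟩`, which sees `r` only through the one-bit sketch `sign(S r)` and
its norm. The rows of the sketching matrix `S` are indexed by `κ`. -/
noncomputable def qjlEstimator (r y : ι → ℝ) (S : κ → ι → ℝ) : ℝ :=
  √(Real.pi / 2) * (√(∑ j, r j ^ 2) / Fintype.card κ) * ∑ i, qSign (S i ⬝ᵥ r) * (S i ⬝ᵥ y)

lemma integrable_qSign_row_dotProduct_mul (μ : κ → Measure (ι → ℝ)) [∀ i, IsGaussian (μ i)]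
    (r y : ι → ℝ) (i : κ) :
    Integrable (fun S ↦ qSign (S i ⬝ᵥ r) * (S i ⬝ᵥ y)) (Measure.pi μ) :=
  integrable_comp_eval (μ := μ) (integrable_qSign_dotProduct_mul_dotProduct (μ i) r y)

lemma integrable_qjlEstimator (μ : κ → Measure (ι → ℝ)) [∀ i, IsGaussian (μ i)] (r y : ι → ℝ) :
    Integrable (qjlEstimator r y) (Measure.pi μ) :=
  (integrable_finsetSum _ fun i _ ↦ integrable_qSign_row_dotProduct_mul μ r y i).const_mul _

theorem integral_qjlEstimator [Nonempty κ] (r y : ι → ℝ) :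
    ∫ S, qjlEstimator r y S ∂Measure.pi (fun _ : κ ↦ stdGaussianPi ι) = r ⬝ᵥ y := by
  let E := ∫ g, qSign (g ⬝ᵥ r) * (g ⬝ᵥ y) ∂stdGaussianPi ι
  have integral_row (i : κ) : ∫ S, qSign (S i ⬝ᵥ r) * (S i ⬝ᵥ y)
      ∂Measure.pi (fun _ : κ ↦ stdGaussianPi ι) = E :=
    integral_comp_eval (μ := fun _ : κ ↦ stdGaussianPi ι)
      (integrable_qSign_dotProduct_mul_dotProduct _ r y).aestronglyMeasurable
  have sqrt_mul_sqrt : √(Real.pi / 2) * √(2 / Real.pi) = 1 := by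
    rw [← inv_div, Real.sqrt_inv, inv_mul_cancel₀ (by positivity)]
  calc ∫ S, qjlEstimator r y S ∂Measure.pi (fun _ : κ ↦ stdGaussianPi ι)
    _ = √(Real.pi / 2) * (√(∑ j, r j ^ 2) / Fintype.card κ) * ∑ _i : κ, E := by
      simp_rw [qjlEstimator, integral_const_mul]
      rw [integral_finsetSum _ fun i _ ↦ integrable_qSign_row_dotProduct_mul _ r y i]
      simp_rw [integral_row]
    _ = √(Real.pi / 2) * (√(∑ j, r j ^ 2) * E) := by
      rw [Finset.sum_const, Finset.card_univ, nsmul_eq_mul]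
      field_simp
    _ = r ⬝ᵥ y := by
      rw [sqrt_sum_sq_mul_integral_qSign_dotProduct_mul_dotProduct, ← mul_assoc,
        sqrt_mul_sqrt, one_mul]

theorem stmt_9_general [Nonempty κ] {x xbar r : ι → ℝ} (hx : x ≠ 0)
    (hr : r = fun j => x j / √(∑ k, x k ^ 2) - xbar j) (y : ι → ℝ) :
    ∫ S : κ → ι → ℝ,
        (√(∑ k, x k ^ 2) * ∑ j, xbar j * y j +
          √(Real.pi / 2) * (√(∑ k, x k ^ 2) * √(∑ j, r j ^ 2) / Fintype.card κ) *
            ∑ i, qSign (∑ j, S i j * r j) * (∑ j, S i j * y j))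
        ∂(Measure.pi fun _ ↦ Measure.pi fun _ ↦ gaussianReal 0 1) =
      ∑ j, x j * y j := by
  set N := √(∑ k, x k ^ 2)
  have N_ne_zero : N ≠ 0 := (sqrt_sum_sq_pos hx).ne'
  have x_eq : x = N • (xbar + r) := by
    ext j
    simp only [hr, Pi.smul_apply, Pi.add_apply, smul_eq_mul, add_sub_cancel]
    field_simp
  calc
    _ = ∫ S : κ → ι → ℝ, (N * (xbar ⬝ᵥ y) + N * qjlEstimator r y S)
        ∂(Measure.pi fun _ ↦ stdGaussianPi ι) := by
      refine integral_congr_ae (.of_forall fun S ↦ ?_)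
      simp only [qjlEstimator, dotProduct]
      ring
    _ = N * (xbar ⬝ᵥ y) + N * (r ⬝ᵥ y) := by
      rw [integral_add (integrable_const _) ((integrable_qjlEstimator _ r y).const_mul N),
        integral_const, probReal_univ, one_smul, integral_const_mul, integral_qjlEstimator]
    _ = N • (xbar + r) ⬝ᵥ y := by
      rw [smul_dotProduct, add_dotProduct, smul_eq_mul, mul_add]
    _ = ∑ j, x j * y j := by rw [← x_eq, dotProduct]

/-- TurboQuant's full inner-product estimator is unbiased: with r = x/‖x‖ − x̄
nonzero and q = sign(S r) for an i.i.d. Gaussian matrix S,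
E[‖x‖·⟨x̄, y⟩ + √(π/2)·(‖x‖·‖r‖/D)·⟨q, S y⟩] = ⟨x, y⟩. -/
theorem stmt_9 (D : ℕ) (x xbar y r : Fin D → ℝ) (hx : x ≠ 0)
    (hr : r = fun j => x j / Real.sqrt (∑ k, x k ^ 2) - xbar j) (hr0 : r ≠ 0) :
    (∫ S : Fin D → Fin D → ℝ,
        (Real.sqrt (∑ k, x k ^ 2) * ∑ j, xbar j * y j +
          Real.sqrt (Real.pi / 2) *
            (Real.sqrt (∑ k, x k ^ 2) * Real.sqrt (∑ j, r j ^ 2) / D) *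
            ∑ i, qSign (∑ j, S i j * r j) * (∑ j, S i j * y j))
        ∂(Measure.pi fun _ : Fin D => Measure.pi fun _ : Fin D => gaussianReal 0 1)) =
      ∑ j, x j * y j := by
  obtain ⟨i, -⟩ := Function.ne_iff.mp hx
  have : Nonempty (Fin D) := ⟨i⟩
  simpa only [Fintype.card_fin] using stmt_9_general (κ := Fin D) hx hr y
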